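/- Let (W, S) be a finite Coxeter system, B⁺ its Artin–Tits monoid with Garside element Δ, and I ⊆ S. Let w ∈ B⁺ be such that no element of I left-divides w and for every s ∈ I there exists t ∈ S with s·w = w·t, and let v ∈ B_I⁺. If a is a left gcd of v and Δ and c is a left gcd of w and Δ, then a·c is a left gcd of v·w and Δ. -/

import Mathlib

/-- The alternating word `s t s t ⋯` of length `m`, starting with `s`. -/
def altWord {B : Type*} (s t : B) : ℕ → List B
  | 0 => []
  | n + 1 => s :: altWord t s n

/-- The braid congruence on the free monoid over `B` associated to a Coxeter matrix `M`:
the congruence generated by the braid relations, identifying the alternating words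
`s t s ⋯` and `t s t ⋯` of length `M s t` whenever `s ≠ t` and `M s t < ∞`
(infinity being encoded by the entry `0`). -/
def braidCon {B : Type*} (M : CoxeterMatrix B) : Con (FreeMonoid B) :=
  conGen (fun a b => ∃ s t : B, s ≠ t ∧ M s t ≠ 0 ∧
    a = FreeMonoid.ofList (altWord s t (M s t)) ∧
    b = FreeMonoid.ofList (altWord t s (M s t)))

/-- The Artin–Tits monoid of a Coxeter matrix `M`: the quotient of the free monoid
on `B` by the braid relations. -/
def ArtinTitsMonoid {B : Type*} (M : CoxeterMatrix B) : Type _ :=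
  (braidCon M).Quotient

instance {B : Type*} (M : CoxeterMatrix B) : Monoid (ArtinTitsMonoid M) :=
  inferInstanceAs (Monoid (braidCon M).Quotient)

/-- The image in the Artin–Tits monoid of a generator. -/
def ArtinTitsMonoid.of {B : Type*} (M : CoxeterMatrix B) (s : B) : ArtinTitsMonoid M :=
  (braidCon M).mk' (FreeMonoid.of s)

/-- `d` is a left gcd of `x` and `y`. -/
def IsLeftGcd {N : Type*} [Monoid N] (x y d : N) : Prop :=
  (∃ u, x = d * u) ∧ (∃ u, y = d * u) ∧
    ∀ e, (∃ u, x = e * u) → (∃ u, y = e * u) → ∃ u, d = e * u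

namespace ArtinAux

open Complex in
/-- The parameter `q` with `q ^ 2` a primitive `m`-th root of unity (of infinite order if `m = 0`). -/
noncomputable def qpar (m : ℕ) : ℂ := if m = 0 then 2 else Complex.exp (Real.pi * I / m)

theorem qpar_ne_zero (m : ℕ) : qpar m ≠ 0 := by
  unfold qpar
  split_ifs
  · norm_num
  · exact Complex.exp_ne_zero _

theorem qpar_sq_primitive {m : ℕ} (hm : m ≠ 0) : IsPrimitiveRoot (qpar m ^ 2) m := by
  have := Complex.isPrimitiveRoot_exp m hm
  unfold qpar
  rw [if_neg hm, ← Complex.exp_nat_mul]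
  convert this using 2
  push_cast
  ring

theorem qpar_dvd {m k : ℕ} (h : (qpar m ^ 2) ^ k = 1) : m ∣ k := by
  by_cases hm : m = 0
  · subst hm
    have h2 : ((2 : ℂ) ^ 2) ^ k = 1 := by simpa [qpar] using h
    by_contra hk
    have hk : k ≠ 0 := by simpa using hk
    have h3 : ((4 : ℕ) ^ k : ℂ) = 1 := by rw [← h2]; norm_num
    have h4 : 4 ^ k = 1 := by exact_mod_cast h3
    simp [hk] at h4
  · exact (qpar_sq_primitive hm).dvd_of_pow_eq_one k h

theorem qpar_one : qpar 1 = -1 := by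
  simp [qpar]

section geom
variable {B : Type*} (M : CoxeterMatrix B)

/-- Entries of the (complex) Cartan matrix. -/
noncomputable def cart (i j : B) : ℂ := -(qpar (M i j) + (qpar (M i j))⁻¹)

theorem cart_self (i : B) : cart M i i = 2 := by
  simp [cart, qpar_one]; norm_num

theorem cart_symm (i j : B) : cart M i j = cart M j i := by
  simp [cart, M.symmetric i j]

/-- The reflections. -/
noncomputable def sig (i : B) : Module.End ℂ (B → ℂ) where
  toFun f := f - f i • cart M i
  map_add' f g := by ext j; simp; ring
  map_smul' c f := by ext j; simp; ring

theorem sig_apply (i : B) (f : B → ℂ) : sig M i f = f - f i • cart M i := rfl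

theorem sig_sq (i : B) : sig M i * sig M i = 1 := by
  ext f j
  simp [sig_apply, cart_self]
  ring

theorem eigen (i j : B) (q : ℂ) (hq : q ≠ 0) (h : cart M i j = -(q + q⁻¹)) :
    (sig M i * sig M j) (q • cart M i + cart M j) = q ^ 2 • (q • cart M i + cart M j) := by
  have h' := cart_symm M i j
  ext k
  simp only [Module.End.mul_apply, sig_apply, Pi.sub_apply, Pi.add_apply, Pi.smul_apply,
    smul_eq_mul, cart_self, h, ← h']
  field_simp
  ring

theorem eigen_pow (i j : B) (q : ℂ) (hq : q ≠ 0) (h : cart M i j = -(q + q⁻¹)) (k : ℕ) :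
    ((sig M i * sig M j) ^ k) (q • cart M i + cart M j) =
      (q ^ 2) ^ k • (q • cart M i + cart M j) := by
  induction k with
  | zero => simp
  | succ k ih =>
    rw [pow_succ, Module.End.mul_apply, eigen M i j q hq h, map_smul, ih, smul_smul]
    congr 1
    ring

theorem fixed_pow (i j : B) (f : B → ℂ) (hi : f i = 0) (hj : f j = 0) (k : ℕ) :
    ((sig M i * sig M j) ^ k) f = f := by
  induction k with
  | zero => simp
  | succ k ih =>
    rw [pow_succ, Module.End.mul_apply]
    have : (sig M i * sig M j) f = f := by
      simp [Module.End.mul_apply, sig_apply, hi, hj]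
    rw [this, ih]

theorem qpar_sq_ne {i j : B} (hij : i ≠ j) : qpar (M i j) ^ 2 ≠ 1 := by
  intro h
  have := qpar_dvd (m := M i j) (k := 1) (by simpa using h)
  exact M.off_diagonal i j hij (Nat.dvd_one.mp this)

theorem sig_liftable : M.IsLiftable (sig M) := by
  intro i j
  by_cases hij : i = j
  · subst hij; simp [sig_sq]
  by_cases hm : M i j = 0
  · simp [hm]
  set q := qpar (M i j) with hqdef
  have hq : q ≠ 0 := qpar_ne_zero _
  have hq2 : q ^ 2 ≠ 1 := qpar_sq_ne M hij
  have hqm : (q ^ 2) ^ (M i j) = 1 := (qpar_sq_primitive hm).pow_eq_one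
  have hc : cart M i j = -(q + q⁻¹) := rfl
  have hc' : cart M i j = -(q⁻¹ + q⁻¹⁻¹) := by rw [hc, inv_inv]; ring
  have e1 := eigen_pow M i j q hq hc (M i j)
  have e2 := eigen_pow M i j q⁻¹ (inv_ne_zero hq) hc' (M i j)
  rw [hqm, one_smul] at e1
  have hqm' : (q⁻¹ ^ 2) ^ (M i j) = 1 := by rw [inv_pow, inv_pow, hqm, inv_one]
  rw [hqm', one_smul] at e2
  have hd : q - q⁻¹ ≠ 0 := by
    intro h
    apply hq2
    field_simp at h
    linear_combination h
  refine LinearMap.ext fun f => ?_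
  -- coordinates
  set v1 := q • cart M i + cart M j with hv1
  set v2 := q⁻¹ • cart M i + cart M j with hv2
  have a1 : v1 i = q - q⁻¹ := by
    simp [hv1, cart_self, cart_symm M j i, hc]; ring
  have a2 : v2 i = -(q - q⁻¹) := by
    simp [hv2, cart_self, cart_symm M j i, hc]; ring
  have b1 : v1 j = 1 - q ^ 2 := by
    simp [hv1, cart_self, hc]; field_simp; ring
  have b2 : v2 j = 1 - q⁻¹ ^ 2 := by
    simp [hv2, cart_self, hc]; field_simp; ring
  obtain ⟨x, y, hx, hy⟩ : ∃ x y : ℂ, x * v1 i + y * v2 i = f i ∧ x * v1 j + y * v2 j = f j := by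
    rw [a1, a2, b1, b2]
    have hd2 : q ^ 2 - 1 ≠ 0 := sub_ne_zero.mpr hq2
    have hdd : q * (q - q⁻¹) ≠ 0 := mul_ne_zero hq hd
    -- b1 = -q (q - 1/q), b2 = (1/q)(q - 1/q)
    refine ⟨-(f j / (q - q⁻¹) + q⁻¹ * (f i / (q - q⁻¹))) / (q - q⁻¹),
      -(f j / (q - q⁻¹) + q * (f i / (q - q⁻¹))) / (q - q⁻¹) , ?_, ?_⟩
    · field_simp; ring
    · field_simp; ring
  have hfix := fixed_pow M i j (f - x • v1 - y • v2)
    (by simp only [Pi.sub_apply, Pi.smul_apply, smul_eq_mul]; rw [← hx]; ring)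
    (by simp only [Pi.sub_apply, Pi.smul_apply, smul_eq_mul]; rw [← hy]; ring) (M i j)
  rw [map_sub, map_sub, map_smul, map_smul, e1, e2] at hfix
  have := sub_left_injective (sub_left_injective hfix)
  simpa using this

end geom

section cox
variable {B : Type*} {M : CoxeterMatrix B} {W : Type*} [Group W] (cs : CoxeterSystem M W)

theorem order_dvd {i j : B} (hij : i ≠ j) {k : ℕ}
    (h : (cs.simple i * cs.simple j) ^ k = 1) : M i j ∣ k := by
  have h1 := congrArg (cs.lift ⟨sig M, sig_liftable M⟩) h
  rw [map_pow, map_mul, cs.lift_apply_simple, cs.lift_apply_simple, map_one] at h1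
  set q := qpar (M i j) with hqdef
  have hq : q ≠ 0 := qpar_ne_zero _
  have hq2 : q ^ 2 ≠ 1 := qpar_sq_ne M hij
  have hc : cart M i j = -(q + q⁻¹) := rfl
  have e1 := eigen_pow M i j q hq hc k
  rw [h1] at e1
  have e2 := congrFun e1 i
  have a1 : (q • cart M i + cart M j) i = q - q⁻¹ := by
    simp [cart_self, cart_symm M j i, hc]; ring
  have hd : q - q⁻¹ ≠ 0 := by
    intro h
    apply hq2
    field_simp at h
    linear_combination h
  rw [Module.End.one_apply, Pi.smul_apply, a1, smul_eq_mul] at e2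
  have : (q ^ 2) ^ k = 1 := by
    apply mul_right_cancel₀ hd
    rw [← e2, one_mul]
  exact qpar_dvd this

theorem M_ne_zero (cs : CoxeterSystem M W) [Finite W] {i j : B} (hij : i ≠ j) : M i j ≠ 0 := by
  intro h
  have := order_dvd cs hij (k := orderOf (cs.simple i * cs.simple j)) (pow_orderOf_eq_one _)
  rw [h, zero_dvd_iff] at this
  exact (orderOf_pos (cs.simple i * cs.simple j)).ne' this

end cox

end ArtinAux
namespace ArtinAux

section exch
open scoped Classical
variable {B : Type*} {M : CoxeterMatrix B} {W : Type*} [Group W] (cs : CoxeterSystem M W)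

/-- The Tits action of a simple reflection on `W × ℤ/2`. -/
noncomputable def eta (i : B) : Function.End (W × ZMod 2) :=
  fun p => (cs.simple i * p.1 * cs.simple i, p.2 + if p.1 = cs.simple i then 1 else 0)

theorem eta_pow (i j : B) (k : ℕ) (t : W) (e : ZMod 2) :
    ((eta cs i * eta cs j) ^ k) (t, e) =
      ((cs.simple i * cs.simple j) ^ k * t * ((cs.simple i * cs.simple j) ^ k)⁻¹,
        e + ∑ l ∈ Finset.range (2 * k),
          if t = cs.simple j * (cs.simple i * cs.simple j) ^ l then 1 else 0) := by
  set u := cs.simple i * cs.simple j with hu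
  have hui : u⁻¹ = cs.simple j * cs.simple i := by simp [hu]
  have hju : cs.simple j * u = u⁻¹ * cs.simple j := by rw [hui, hu]; group
  have hjk : ∀ k : ℕ, cs.simple j * u ^ k = (u ^ k)⁻¹ * cs.simple j := by
    intro k
    induction k with
    | zero => simp
    | succ k ih =>
      rw [pow_succ, ← mul_assoc, ih, mul_assoc, hju]
      rw [← mul_assoc, ← mul_inv_rev]
      rw [← pow_succ', ← pow_succ]
  induction k with
  | zero => simp; rfl
  | succ k ih =>
    rw [pow_succ']
    show (eta cs i * eta cs j) (((eta cs i * eta cs j) ^ k) (t, e)) = _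
    rw [ih]
    show eta cs i (eta cs j _) = _
    unfold eta
    have c1 : (u ^ k * t * (u ^ k)⁻¹ = cs.simple j) ↔ t = cs.simple j * u ^ (2 * k) := by
      have : cs.simple j * u ^ (2 * k) = (u ^ k)⁻¹ * cs.simple j * u ^ k := by
        rw [two_mul, pow_add, ← mul_assoc, hjk]
      rw [this]
      constructor
      · intro h; rw [← h]; group
      · intro h; rw [h]; group
    have c2 : (cs.simple j * (u ^ k * t * (u ^ k)⁻¹) * cs.simple j = cs.simple i) ↔
        t = cs.simple j * u ^ (2 * k + 1) := by
      have : cs.simple j * u ^ (2 * k + 1) =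
          (u ^ k)⁻¹ * (cs.simple j * cs.simple i * cs.simple j) * u ^ k := by
        rw [show 2 * k + 1 = k + (1 + k) by ring, pow_add, ← mul_assoc, hjk, pow_add, pow_one]
        simp only [hu, mul_assoc]
      rw [this]
      constructor
      · intro h; rw [← h]
        have := cs.simple_mul_simple_self j
        simp only [mul_assoc]
        simp
      · intro h; rw [h]
        simp [mul_assoc]
    rw [show 2 * (k + 1) = 2 * k + 1 + 1 by ring, Finset.sum_range_succ, Finset.sum_range_succ]
    simp only [c1, c2, Prod.mk.injEq]
    refine ⟨?_, by ring⟩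
    rw [pow_succ', mul_inv_rev, hui]
    simp only [hu, mul_assoc]

theorem eta_liftable : M.IsLiftable (eta cs) := by
  intro i j
  funext ⟨t, e⟩
  rw [eta_pow, cs.simple_mul_simple_pow, two_mul, Finset.sum_range_add]
  have : ∀ l, (cs.simple i * cs.simple j) ^ (M i j + l) = (cs.simple i * cs.simple j) ^ l := by
    intro l; rw [pow_add, cs.simple_mul_simple_pow, one_mul]
  simp only [this, CharTwo.add_self_eq_zero]
  simp
  rfl

theorem eta_word (ω : List B) (t : W) (e : ZMod 2) :
    cs.lift ⟨eta cs, eta_liftable cs⟩ (cs.wordProd ω) (t, e) =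
      (cs.wordProd ω * t * (cs.wordProd ω)⁻¹, e + ((cs.rightInvSeq ω).count t : ℕ)) := by
  induction ω with
  | nil => simp; rfl
  | cons i ω ih =>
    rw [cs.wordProd_cons, map_mul]
    show cs.lift ⟨eta cs, eta_liftable cs⟩ (cs.simple i) (cs.lift ⟨eta cs, eta_liftable cs⟩ _ _) = _
    rw [ih, cs.lift_apply_simple]
    unfold eta
    have c1 : (cs.wordProd ω * t * (cs.wordProd ω)⁻¹ = cs.simple i) ↔
        (cs.wordProd ω)⁻¹ * cs.simple i * cs.wordProd ω = t := by
      constructor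
      · intro h; rw [← h]; group
      · intro h; rw [← h]; group
    simp only [c1, CoxeterSystem.rightInvSeq, List.count_cons, Prod.mk.injEq]
    constructor
    · simp [mul_assoc]
    · push_cast
      simp [add_assoc]

theorem exch_right (ω : List B) (i : B)
    (h : cs.length (cs.wordProd ω * cs.simple i) < cs.length (cs.wordProd ω)) :
    cs.simple i ∈ cs.rightInvSeq ω := by
  obtain ⟨ω', hr, hω'⟩ := cs.exists_isReduced (cs.wordProd ω * cs.simple i)
  have hp : cs.wordProd (ω'.concat i) = cs.wordProd ω := by
    rw [cs.wordProd_concat, ← hω']; simp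
  have hred : cs.IsReduced (ω'.concat i) := by
    unfold CoxeterSystem.IsReduced
    have := cs.length_mul_simple (cs.wordProd ω) i
    rw [hp, List.length_concat, ← hr.eq, ← hω']
    omega
  have h1 := eta_word cs ω (cs.simple i) 0
  have h2 := eta_word cs (ω'.concat i) (cs.simple i) 0
  rw [hp, h1] at h2
  have h3 := congrArg Prod.snd h2
  simp only [zero_add] at h3
  have hmem : cs.simple i ∈ cs.rightInvSeq (ω'.concat i) := by
    rw [cs.rightInvSeq_concat]; simp
  rw [List.count_eq_one_of_mem hred.nodup_rightInvSeq hmem] at h3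
  by_contra hn
  rw [List.count_eq_zero_of_not_mem hn] at h3
  simp at h3

theorem exch_left (ω : List B) (i : B)
    (h : cs.length (cs.simple i * cs.wordProd ω) < cs.length (cs.wordProd ω)) :
    cs.simple i ∈ cs.leftInvSeq ω := by
  have := exch_right cs ω.reverse i (by
    rw [cs.wordProd_reverse, cs.length_inv, ← cs.length_inv]
    simpa using h)
  rw [cs.rightInvSeq_reverse] at this
  simpa using this

end exch

section weak
variable {B : Type*} {M : CoxeterMatrix B} {W : Type*} [Group W] (cs : CoxeterSystem M W)

theorem lis_append (ω₁ ω₂ : List B) : cs.leftInvSeq (ω₁ ++ ω₂) =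
    cs.leftInvSeq ω₁ ++ (cs.leftInvSeq ω₂).map (fun r => cs.wordProd ω₁ * r * (cs.wordProd ω₁)⁻¹) := by
  induction ω₁ with
  | nil => simp
  | cons i ω ih =>
    simp only [List.cons_append, CoxeterSystem.leftInvSeq, ih, List.map_append, List.map_map,
      cs.wordProd_cons]
    congr 2
    apply List.map_congr_left
    intro r _
    simp [mul_assoc]

theorem lis_erase {ω : List B} {r : W} (h : r ∈ cs.leftInvSeq ω) :
    ∃ j < ω.length, r * cs.wordProd ω = cs.wordProd (ω.eraseIdx j) := by
  obtain ⟨j, hj, rfl⟩ := List.getElem_of_mem h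
  refine ⟨j, by simpa using hj, ?_⟩
  rw [← cs.getD_leftInvSeq_mul_wordProd, List.getD_eq_getElem _ _ hj]

theorem lis_length {ω : List B} {r : W} (h : r ∈ cs.leftInvSeq ω) :
    cs.length (r * cs.wordProd ω) < ω.length := by
  obtain ⟨j, hj, h⟩ := lis_erase cs h
  rw [h]
  refine lt_of_le_of_lt (cs.length_wordProd_le _) ?_
  rw [List.length_eraseIdx_of_lt hj]; omega

theorem exch_word (ω : List B) (y : W) (i : B)
    (h : cs.length (cs.simple i * (cs.wordProd ω * y)) < cs.length (cs.wordProd ω * y)) :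
    cs.simple i ∈ cs.leftInvSeq ω ∨
      cs.length ((cs.wordProd ω)⁻¹ * cs.simple i * cs.wordProd ω * y) < cs.length y := by
  obtain ⟨ζ, hr, rfl⟩ := cs.exists_isReduced y
  rw [← cs.wordProd_append] at h
  have := exch_left cs _ _ h
  rw [lis_append, List.mem_append] at this
  refine this.imp id ?_
  intro h
  obtain ⟨r, hr1, hr2⟩ := List.mem_map.mp h
  have e : (cs.wordProd ω)⁻¹ * cs.simple i * cs.wordProd ω = r := by rw [← hr2]; group
  rw [e, hr.eq]
  exact lis_length cs hr1

theorem exch_elt (x y : W) (i : B)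
    (h : cs.length (cs.simple i * (x * y)) < cs.length (x * y)) :
    cs.length (cs.simple i * x) < cs.length x ∨
      cs.length (x⁻¹ * cs.simple i * x * y) < cs.length y := by
  obtain ⟨ω, hr, rfl⟩ := cs.exists_isReduced x
  refine (exch_word cs ω y i h).imp ?_ id
  intro h
  rw [hr.eq]
  exact lis_length cs h

/-- weak order -/
def wle (u v : W) : Prop := cs.length u + cs.length (u⁻¹ * v) = cs.length v

/-- length additivity -/
def perp (u v : W) : Prop := cs.length (u * v) = cs.length u + cs.length v

variable {cs}

theorem wle_refl (u : W) : wle cs u u := by simp [wle]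

theorem len_tri (u v : W) : cs.length v ≤ cs.length u + cs.length (u⁻¹ * v) := by
  have := cs.length_mul_le u (u⁻¹ * v)
  simpa using this

theorem len_tri' (u v w : W) :
    cs.length (u⁻¹ * w) ≤ cs.length (u⁻¹ * v) + cs.length (v⁻¹ * w) := by
  have := cs.length_mul_le (u⁻¹ * v) (v⁻¹ * w)
  simpa [mul_assoc] using this

theorem wle_trans {u v w : W} (h1 : wle cs u v) (h2 : wle cs v w) : wle cs u w := by
  unfold wle at *
  have := len_tri (cs := cs) u w
  have := len_tri' (cs := cs) u v w
  omega

theorem wle_len {u v : W} (h1 : wle cs u v) : cs.length u ≤ cs.length v := by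
  unfold wle at *; omega

theorem wle_eq_of_len {u v : W} (h1 : wle cs u v) (h2 : cs.length v ≤ cs.length u) : u = v := by
  unfold wle at *
  have : cs.length (u⁻¹ * v) = 0 := by omega
  rw [cs.length_eq_zero_iff] at this
  exact inv_mul_eq_one.mp this

theorem wle_antisymm {u v : W} (h1 : wle cs u v) (h2 : wle cs v u) : u = v :=
  wle_eq_of_len h1 (wle_len h2)

theorem wle_mid {u v w : W} (h1 : wle cs u v) (h2 : wle cs v w) :
    wle cs (u⁻¹ * v) (u⁻¹ * w) := by
  have h3 := wle_trans h1 h2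
  unfold wle at *
  have : (u⁻¹ * v)⁻¹ * (u⁻¹ * w) = v⁻¹ * w := by group
  rw [this]
  omega

theorem wle_mul_iff {u z : W} : wle cs u (u * z) ↔ perp cs u z := by
  unfold wle perp
  rw [inv_mul_cancel_left]
  exact eq_comm

theorem perp_of_wle {u v : W} (h : wle cs u v) : perp cs u (u⁻¹ * v) := by
  rw [← wle_mul_iff]; simpa using h

theorem perp_prefix {u z z' : W} (h : perp cs u z) (h' : wle cs z' z) : perp cs u z' := by
  unfold perp wle at *
  have h1 := cs.length_mul_le u z'
  have h2 := cs.length_mul_le (u * z') (z'⁻¹ * z)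
  have : u * z' * (z'⁻¹ * z) = u * z := by group
  rw [this] at h2
  omega

theorem perp_mono {u z z' : W} (h : perp cs u z) (h' : wle cs z' z) :
    wle cs (u * z') (u * z) := by
  have h2 := perp_prefix h h'
  unfold perp wle at *
  have : (u * z')⁻¹ * (u * z) = z'⁻¹ * z := by group
  rw [this]
  omega

theorem perp_cancel {u z z' : W} (h : perp cs u z) (h2 : perp cs u z')
    (h' : wle cs (u * z') (u * z)) : wle cs z' z := by
  unfold perp wle at *
  have : (u * z')⁻¹ * (u * z) = z'⁻¹ * z := by group
  rw [this] at h'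
  omega

theorem wle_step {u v : W} (h : wle cs u v) (hne : u ≠ v) :
    ∃ i, cs.length (u * cs.simple i) = cs.length u + 1 ∧ wle cs (u * cs.simple i) v := by
  have hne' : u⁻¹ * v ≠ 1 := fun h => hne (inv_mul_eq_one.mp h)
  obtain ⟨i, hi⟩ := cs.exists_leftDescent_of_ne_one hne'
  rw [cs.isLeftDescent_iff] at hi
  refine ⟨i, ?_⟩
  have h1 := len_tri (cs := cs) (u * cs.simple i) v
  have h2 := cs.length_mul_simple u i
  have e : (u * cs.simple i)⁻¹ * v = cs.simple i * (u⁻¹ * v) := by simp [mul_assoc]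
  unfold wle at *
  rw [e] at h1 ⊢
  omega

theorem step_descent {u v : W} {i : B} (h1 : cs.length (u * cs.simple i) = cs.length u + 1)
    (h : wle cs (u * cs.simple i) v) : wle cs u v ∧
      cs.length (cs.simple i * (u⁻¹ * v)) < cs.length (u⁻¹ * v) := by
  have h0 : wle cs u (u * cs.simple i) := by
    unfold wle; simp [h1]
  have h3 := wle_trans h0 h
  refine ⟨h3, ?_⟩
  have e : (u * cs.simple i)⁻¹ * v = cs.simple i * (u⁻¹ * v) := by simp [mul_assoc]
  unfold wle at *
  rw [e] at h
  omega

theorem wle_top {w₀ : W} (hw₀ : ∀ u : W, cs.length u ≤ cs.length w₀) (u : W) : wle cs u w₀ := by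
  induction hn : cs.length u generalizing u with
  | zero =>
    rw [cs.length_eq_zero_iff] at hn
    subst hn; simp [wle]
  | succ n ih =>
    have hne : u ≠ 1 := by rintro rfl; simp at hn
    obtain ⟨i, hi⟩ := cs.exists_leftDescent_of_ne_one hne
    rw [cs.isLeftDescent_iff] at hi
    set u' := cs.simple i * u with hu'
    have hu : cs.simple i * u' = u := by simp [hu']
    have h1 : wle cs u' w₀ := ih u' (by omega)
    have h2 : cs.length (cs.simple i * (u' * (u'⁻¹ * w₀))) < cs.length (u' * (u'⁻¹ * w₀)) := by
      rw [mul_inv_cancel_left]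
      have := cs.length_simple_mul w₀ i
      have := hw₀ (cs.simple i * w₀)
      omega
    rcases exch_elt cs u' (u'⁻¹ * w₀) i h2 with h3 | h3
    · rw [hu] at h3; omega
    · have e : u'⁻¹ * cs.simple i * u' * (u'⁻¹ * w₀) = u⁻¹ * w₀ := by
        rw [hu']; simp [mul_assoc]
      rw [e] at h3
      have := len_tri (cs := cs) u w₀
      unfold wle at *
      omega

end weak

end ArtinAux
namespace ArtinAux

section rank2
variable {B : Type*} {M : CoxeterMatrix B} {W : Type*} [Group W] {cs : CoxeterSystem M W}

theorem alt_len (s t : B) (n : ℕ) : (altWord s t n).length = n := by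
  induction n generalizing s t with
  | zero => rfl
  | succ n ih => simp [altWord, ih]

theorem alt_eq (s t : B) (n : ℕ) :
    altWord s t n = (CoxeterSystem.alternatingWord t s n).reverse := by
  induction n generalizing s t with
  | zero => rfl
  | succ n ih => simp [altWord, ih, CoxeterSystem.alternatingWord]

theorem alt_braid (s t : B) :
    cs.wordProd (altWord s t (M s t)) = cs.wordProd (altWord t s (M s t)) := by
  have h := cs.wordProd_braidWord_eq t s
  unfold CoxeterSystem.braidWord at h
  rw [M.symmetric t s] at h
  rw [alt_eq, alt_eq, cs.wordProd_reverse, cs.wordProd_reverse, h]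

theorem lis_alt (s t : B) (k : ℕ) (r : W) (h : r ∈ cs.leftInvSeq (altWord s t k)) :
    ∃ j < k, r = (cs.simple s * cs.simple t) ^ j * cs.simple s := by
  induction k generalizing s t r with
  | zero => simp [altWord] at h
  | succ k ih =>
    simp only [altWord, CoxeterSystem.leftInvSeq, List.mem_cons, List.mem_map] at h
    rcases h with rfl | ⟨r', h1, rfl⟩
    · exact ⟨0, by omega, by simp⟩
    · obtain ⟨j, hj, rfl⟩ := ih t s r' h1
      refine ⟨j + 1, by omega, ?_⟩
      have : ∀ j : ℕ, cs.simple s * (cs.simple t * cs.simple s) ^ j =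
          (cs.simple s * cs.simple t) ^ j * cs.simple s := by
        intro j
        induction j with
        | zero => simp
        | succ j ih => rw [pow_succ, ← mul_assoc, ih, pow_succ]; simp [mul_assoc]
      simp only [MulAut.conj_apply, cs.inv_simple]
      rw [← mul_assoc, this, pow_succ]
      simp [mul_assoc]

theorem alt_prefix {s t : B} (hst : s ≠ t) {x : W}
    (hs : cs.length (cs.simple s * x) < cs.length x)
    (ht : cs.length (cs.simple t * x) < cs.length x) (k : ℕ) (hk : M s t = 0 ∨ k ≤ M s t) :
    cs.length x = k + cs.length ((cs.wordProd (altWord s t k))⁻¹ * x) := by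
  induction k generalizing s t with
  | zero => simp [altWord]
  | succ k ih =>
    have h1 := ih hst.symm ht hs (by rw [M.symmetric t s]; omega)
    set A := cs.wordProd (altWord t s k) with hA
    have h2 : cs.length (cs.simple s * (A * (A⁻¹ * x))) < cs.length (A * (A⁻¹ * x)) := by
      simpa using hs
    rw [show altWord s t (k + 1) = s :: altWord t s k from rfl, cs.wordProd_cons, ← hA]
    rcases exch_word cs _ _ _ h2 with h3 | h3
    · exfalso
      obtain ⟨j, hj, h4⟩ := lis_alt _ _ _ _ h3
      have h5 : (cs.simple t * cs.simple s) ^ (j + 1) = 1 := by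
        rw [pow_succ, ← mul_assoc, ← h4]; simp
      have h6 := order_dvd cs hst.symm h5
      rw [M.symmetric t s] at h6
      rcases hk with hk | hk
      · rw [hk] at h6; simp at h6
      · have := Nat.le_of_dvd (by omega) h6
        omega
    · rw [← hA] at h3
      have e : A⁻¹ * cs.simple s * A * (A⁻¹ * x) = (cs.simple s * A)⁻¹ * x := by
        simp [mul_assoc]
      rw [e] at h3
      have h4 := len_tri (cs := cs) (cs.simple s * A) x
      have h5 := cs.length_mul_le (cs.simple s) A
      have h6 : cs.length A ≤ k := by
        have := cs.length_wordProd_le (altWord t s k)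
        rwa [alt_len] at this
      rw [cs.length_simple] at h5
      omega

theorem exists_top (cs : CoxeterSystem M W) [Finite W] :
    ∃ w₀ : W, ∀ u : W, cs.length u ≤ cs.length w₀ :=
  Finite.exists_max _

theorem alt_reduced (cs : CoxeterSystem M W) [Finite W] {s t : B} (hst : s ≠ t) {k : ℕ}
    (hk : k ≤ M s t) : cs.IsReduced (altWord s t k) := by
  obtain ⟨w₀, hw₀⟩ := exists_top cs
  have h := fun s => hw₀ (cs.simple s * w₀)
  have h' := fun s => cs.length_simple_mul w₀ s
  have h1 := alt_prefix hst (cs := cs) (x := w₀)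
    (by have := h s; have := h' s; omega) (by have := h t; have := h' t; omega) k (Or.inr hk)
  have h2 := len_tri (cs := cs) (cs.wordProd (altWord s t k)) w₀
  have h3 := cs.length_wordProd_le (altWord s t k)
  unfold CoxeterSystem.IsReduced
  rw [alt_len] at *
  omega

theorem alt_right [Finite W] {s t : B} (hst : s ≠ t) {v : W}
    (hs : cs.length (v * cs.simple s) = cs.length v + 1)
    (ht : cs.length (v * cs.simple t) = cs.length v + 1) :
    perp cs v (cs.wordProd (altWord s t (M s t))) := by
  obtain ⟨w₀, hw₀⟩ := exists_top cs
  have h1 := alt_prefix hst (step_descent hs (wle_top hw₀ _)).2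
    (step_descent ht (wle_top hw₀ _)).2 (M s t) (Or.inr le_rfl)
  have h2 := wle_top hw₀ v
  have h3 := wle_top hw₀ (v * cs.wordProd (altWord s t (M s t)))
  have h4 := (alt_reduced cs hst le_rfl).eq
  rw [alt_len] at h4
  unfold perp
  unfold wle at h2 h3
  rw [mul_inv_rev, mul_assoc] at h3
  omega

/-- existence of the maximal prefix of `y` that can be multiplied by `u` -/
theorem exists_mx (cs : CoxeterSystem M W) [Finite W] (u y : W) :
    ∃ m, (wle cs m y ∧ perp cs u m) ∧ ∀ x, wle cs x y → perp cs u x → wle cs x m := by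
  have key : ∀ n : ℕ, ∀ z : W, cs.length y - cs.length z = n → wle cs z y → perp cs u z →
      ∃ m, (wle cs m y ∧ perp cs u m) ∧
        ∀ x, wle cs z x → wle cs x y → perp cs u x → wle cs x m := by
    intro n
    induction n using Nat.strong_induction_on with
    | _ n ih =>
    intro z hn hz hu
    by_cases hex : ∃ i, cs.length (z * cs.simple i) = cs.length z + 1 ∧
        wle cs (z * cs.simple i) y ∧ perp cs u (z * cs.simple i)
    · obtain ⟨s, hs1, hs2, hs3⟩ := hex
      have hlen := wle_len hs2
      obtain ⟨m, ⟨hm1, hm2⟩, hm3⟩ := ih _ (by omega) (z * cs.simple s) rfl hs2 hs3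
      refine ⟨m, ⟨hm1, hm2⟩, ?_⟩
      intro x hx1 hx2 hx3
      by_cases hxz : z = x
      · subst hxz
        have : wle cs z (z * cs.simple s) := by unfold wle; simp [hs1]
        exact wle_trans this (hm3 _ (wle_refl _) hs2 hs3)
      · obtain ⟨t, ht1, ht2⟩ := wle_step hx1 hxz
        by_cases hst : s = t
        · subst hst
          exact hm3 x ht2 hx2 hx3
        · have ht3 := wle_trans ht2 hx2
          have ht4 := perp_prefix hx3 ht2
          set D := cs.wordProd (altWord s t (M s t)) with hD
          have hDlen : cs.length D = M s t := by
            have := (alt_reduced cs hst le_rfl).eq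
            rwa [alt_len] at this
          have hzD : perp cs z D := alt_right hst hs1 ht1
          have hDy : wle cs (z * D) y := by
            have h1 := alt_prefix hst (step_descent hs1 hs2).2 (step_descent ht1 ht3).2
              (M s t) (Or.inr le_rfl)
            rw [← hD] at h1
            unfold wle at hz ⊢
            unfold perp at hzD
            rw [hzD, mul_inv_rev, mul_assoc]
            omega
          have huz : perp cs (u * z) D := by
            apply alt_right hst
            · unfold perp at hu hs3; rw [mul_assoc]; omega
            · unfold perp at hu ht4; rw [mul_assoc]; omega
          have huD : perp cs u (z * D) := by
            unfold perp at *
            rw [← mul_assoc]; omega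
          have sle : ∀ i k r, altWord s t (M s t) = i :: r ∨ altWord t s (M s t) = i :: r →
              k = cs.simple i → wle cs k D := by
            intro i k r h hk
            subst hk
            have hDi : D = cs.simple i * cs.wordProd r ∧ r.length + 1 = M s t := by
              rcases h with h | h
              · have := alt_len s t (M s t)
                rw [h] at this
                exact ⟨by rw [hD, h, cs.wordProd_cons], by simpa using this⟩
              · have := alt_len t s (M s t)
                rw [h] at this
                exact ⟨by rw [hD, alt_braid, h, cs.wordProd_cons], by simpa using this⟩
            have h1 := cs.length_wordProd_le r
            have h2 := len_tri (cs := cs) (cs.simple i) D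
            unfold wle
            have e : (cs.simple i)⁻¹ * D = cs.wordProd r := by rw [hDi.1]; simp
            rw [e, cs.length_simple] at h2
            rw [e, cs.length_simple]
            omega
          obtain ⟨q, hq⟩ : ∃ q, M s t = q + 1 :=
            Nat.exists_eq_succ_of_ne_zero (M_ne_zero cs hst)
          have hsD : wle cs (cs.simple s) D := sle s _ (altWord t s q) (Or.inl (by rw [hq]; rfl)) rfl
          have htD : wle cs (cs.simple t) D := sle t _ (altWord s t q) (Or.inr (by rw [hq]; rfl)) rfl
          obtain ⟨m', ⟨hm1', hm2'⟩, hm3'⟩ := ih _ (by have := wle_len ht3; omega)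
            (z * cs.simple t) rfl ht3 ht4
          have hDm : wle cs (z * D) m' := hm3' _ (perp_mono hzD htD) hDy huD
          have hxm : wle cs x m' := hm3' x ht2 hx2 hx3
          exact wle_trans hxm (hm3 m' (wle_trans (perp_mono hzD hsD) hDm) hm1' hm2')
    · refine ⟨z, ⟨hz, hu⟩, ?_⟩
      intro x hx1 hx2 hx3
      by_cases hxz : z = x
      · subst hxz; exact wle_refl _
      · obtain ⟨t, ht1, ht2⟩ := wle_step hx1 hxz
        exact absurd ⟨t, ht1, wle_trans ht2 hx2, perp_prefix hx3 ht2⟩ hex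
  obtain ⟨m, hm1, hm2⟩ := key _ 1 rfl (by simp [wle]) (by simp [perp])
  exact ⟨m, hm1, fun x => hm2 x (by simp [wle])⟩

end rank2

section parabolic
variable {B : Type*} {M : CoxeterMatrix B} {W : Type*} [Group W] (cs : CoxeterSystem M W)

/-- membership in the parabolic subgroup -/
def InI (I : Set B) (p : W) : Prop := ∃ ω : List B, (∀ i ∈ ω, i ∈ I) ∧ cs.wordProd ω = p

variable {cs} {I : Set B}

theorem InI.mul {p q : W} (hp : InI cs I p) (hq : InI cs I q) : InI cs I (p * q) := by
  obtain ⟨ω, h1, rfl⟩ := hp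
  obtain ⟨ω', h2, rfl⟩ := hq
  refine ⟨ω ++ ω', ?_, cs.wordProd_append _ _⟩
  intro i hi
  rcases List.mem_append.mp hi with h | h
  · exact h1 i h
  · exact h2 i h

theorem InI.inv {p : W} (hp : InI cs I p) : InI cs I p⁻¹ := by
  obtain ⟨ω, h1, rfl⟩ := hp
  exact ⟨ω.reverse, fun i hi => h1 i (by simpa using hi), cs.wordProd_reverse _⟩

theorem InI.one : InI cs I 1 := ⟨[], by simp, by simp⟩

theorem InI.simple {i : B} (hi : i ∈ I) : InI cs I (cs.simple i) := ⟨[i], by simpa, by simp⟩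

theorem InI.of_lis {ω : List B} (h : ∀ i ∈ ω, i ∈ I) {r : W} (hr : r ∈ cs.leftInvSeq ω) :
    InI cs I r := by
  induction ω generalizing r with
  | nil => simp at hr
  | cons i ω ih =>
    have hi := InI.simple (cs := cs) (h i (by simp))
    simp only [CoxeterSystem.leftInvSeq, List.mem_cons, List.mem_map] at hr
    rcases hr with rfl | ⟨r', h1, rfl⟩
    · exact hi
    · exact (hi.mul (ih (fun j hj => h j (by simp [hj])) h1)).mul hi.inv

theorem InI.descent {p : W} (hp : InI cs I p) (hne : p ≠ 1) :
    ∃ i ∈ I, cs.length (cs.simple i * p) < cs.length p := by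
  classical
  have hex : ∃ n, ∃ ω : List B, ω.length = n ∧ (∀ i ∈ ω, i ∈ I) ∧ cs.wordProd ω = p := by
    obtain ⟨ω, h⟩ := hp
    exact ⟨_, ω, rfl, h⟩
  obtain ⟨ω, h1, h2, h3⟩ := Nat.find_spec hex
  have hmin := fun n => Nat.find_min hex (m := n)
  rw [← h1] at hmin
  cases ω with
  | nil => exact absurd (by simpa using h3.symm) hne
  | cons i ω =>
    refine ⟨i, h2 i (by simp), ?_⟩
    by_contra hcon
    have e : cs.simple i * p = cs.wordProd ω := by rw [← h3, cs.wordProd_cons]; simp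
    have e' : cs.simple i * cs.wordProd ω = p := by rw [← e]; simp
    have h4 : cs.simple i ∈ cs.leftInvSeq ω := by
      apply exch_left
      rw [e', ← e]
      have := cs.length_simple_mul p i
      omega
    obtain ⟨j, hj, h5⟩ := lis_erase cs h4
    refine hmin (ω.eraseIdx j).length ?_ ⟨ω.eraseIdx j, rfl, ?_, ?_⟩
    · have := List.length_eraseIdx_of_lt hj
      simp; omega
    · intro k hk
      exact h2 k (by simp [List.mem_of_mem_eraseIdx hk])
    · rw [← h5, e']

theorem InI.reduced {p : W} (hp : InI cs I p) :
    ∃ ω : List B, (∀ i ∈ ω, i ∈ I) ∧ cs.wordProd ω = p ∧ ω.length = cs.length p := by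
  induction hn : cs.length p generalizing p with
  | zero =>
    rw [cs.length_eq_zero_iff] at hn
    subst hn
    exact ⟨[], by simp, by simp, by simp⟩
  | succ n ih =>
    obtain ⟨i, hi, h⟩ := hp.descent (by rintro rfl; simp at hn)
    have := cs.length_simple_mul p i
    obtain ⟨ω, h1, h2, h3⟩ := ih ((InI.simple hi).mul hp) (by omega)
    refine ⟨i :: ω, ?_, ?_, by simp [h3]⟩
    · intro j hj
      rcases List.mem_cons.mp hj with rfl | hj
      · exact hi
      · exact h1 j hj
    · rw [cs.wordProd_cons, h2]; simp

theorem InI.perp_min {x : W} (hx : ∀ p, InI cs I p → cs.length x ≤ cs.length (p * x))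
    {p : W} (hp : InI cs I p) : perp cs p x := by
  obtain ⟨ω, h, rfl⟩ := hp
  unfold perp
  induction ω with
  | nil => simp
  | cons i ω ih =>
    have h' : ∀ j ∈ ω, j ∈ I := fun j hj => h j (by simp [hj])
    have ih := ih h'
    have hi := InI.simple (cs := cs) (h i (by simp))
    have hp : InI cs I (cs.wordProd ω) := ⟨ω, h', rfl⟩
    rw [cs.wordProd_cons]
    set p := cs.wordProd ω
    rw [mul_assoc]
    have a1 := cs.length_simple_mul (p * x) i
    have a2 := cs.length_simple_mul p i
    rcases a2 with a2 | a2
    · rcases a1 with a1 | a1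
      · omega
      · exfalso
        rcases exch_elt cs p x i (by omega) with h3 | h3
        · omega
        · have := hx _ ((hp.inv.mul hi).mul hp)
          omega
    · have a3 := cs.length_mul_le (cs.simple i * p) x
      rw [mul_assoc] at a3
      omega

theorem InI.perp {c : W} (hc : ∀ i ∈ I, ¬ cs.length (cs.simple i * c) < cs.length c)
    {p : W} (hp : InI cs I p) : perp cs p c := by
  classical
  apply InI.perp_min _ hp
  have hex : ∃ n, ∃ p, InI cs I p ∧ cs.length (p * c) = n := ⟨_, 1, InI.one, rfl⟩
  obtain ⟨p₀, h1, h2⟩ := Nat.find_spec hex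
  have hmin : ∀ q, InI cs I q → cs.length (p₀ * c) ≤ cs.length (q * c) := by
    intro q hq
    rw [h2]
    exact Nat.find_min' hex ⟨q, hq, rfl⟩
  have hmin' : ∀ q, InI cs I q → cs.length (p₀ * c) ≤ cs.length (q * (p₀ * c)) := by
    intro q hq
    rw [← mul_assoc]
    exact hmin _ (hq.mul h1)
  by_cases hp0 : p₀⁻¹ = 1
  · rw [inv_eq_one] at hp0
    subst hp0
    simpa using hmin
  · exfalso
    obtain ⟨i, hi, hd⟩ := h1.inv.descent hp0
    apply hc i hi
    have a1 := InI.perp_min hmin' h1.inv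
    have a2 := InI.perp_min hmin' ((InI.simple hi).mul h1.inv)
    unfold ArtinAux.perp at a1 a2
    rw [inv_mul_cancel_left] at a1
    rw [mul_assoc, inv_mul_cancel_left] at a2
    omega

end parabolic

end ArtinAux
namespace ArtinAux

section monoid
variable {B : Type*} {M : CoxeterMatrix B}

/-- The class of a word. -/
def mk (M : CoxeterMatrix B) (ω : List B) : ArtinTitsMonoid M :=
  (braidCon M).mk' (FreeMonoid.ofList ω)

theorem mk_append (ω ω' : List B) : mk M (ω ++ ω') = mk M ω * mk M ω' :=
  map_mul (braidCon M).mk' (FreeMonoid.ofList ω) (FreeMonoid.ofList ω')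

theorem mk_nil : mk M [] = 1 := map_one (braidCon M).mk'

theorem mk_cons (i : B) (ω : List B) : mk M (i :: ω) = ArtinTitsMonoid.of M i * mk M ω :=
  mk_append [i] ω

theorem mk_single (i : B) : mk M [i] = ArtinTitsMonoid.of M i := rfl

theorem mk_surj (x : ArtinTitsMonoid M) : ∃ ω, mk M ω = x := by
  obtain ⟨f, hf⟩ := (braidCon M).mk'_surjective x
  exact ⟨FreeMonoid.toList f, hf⟩

theorem mk_braid {s t : B} (hst : s ≠ t) (hm : M s t ≠ 0) :
    mk M (altWord s t (M s t)) = mk M (altWord t s (M s t)) := by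
  apply (braidCon M).eq.mpr
  exact ConGen.Rel.of _ _ ⟨s, t, hst, hm, rfl, rfl⟩

theorem braid_le {N : Type*} [Monoid N] (f : B → N)
    (hf : ∀ s t, s ≠ t → M s t ≠ 0 →
      ((altWord s t (M s t)).map f).prod = ((altWord t s (M s t)).map f).prod) :
    braidCon M ≤ Con.ker (FreeMonoid.lift f) := by
  apply Con.conGen_le.mpr
  rintro a b ⟨s, t, hst, hm, rfl, rfl⟩
  simp only [Con.ker_rel, FreeMonoid.lift_ofList]
  exact hf s t hst hm

/-- Lifting maps to the Artin-Tits monoid. -/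
def liftA {N : Type*} [Monoid N] (f : B → N)
    (hf : ∀ s t, s ≠ t → M s t ≠ 0 →
      ((altWord s t (M s t)).map f).prod = ((altWord t s (M s t)).map f).prod) :
    ArtinTitsMonoid M →* N :=
  (braidCon M).lift (FreeMonoid.lift f) (braid_le f hf)

theorem liftA_mk {N : Type*} [Monoid N] (f : B → N) (hf) (ω : List B) :
    liftA (M := M) f hf (mk M ω) = (ω.map f).prod := by
  have h := Con.lift_mk' (c := braidCon M) (braid_le f hf) (FreeMonoid.ofList ω)
  rw [FreeMonoid.lift_ofList] at h
  exact h

/-- The length homomorphism. -/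
def lenA (M : CoxeterMatrix B) : ArtinTitsMonoid M →* Multiplicative ℕ :=
  liftA (fun _ => Multiplicative.ofAdd 1) (by
    intro s t _ _
    simp [alt_len])

theorem lenA_mk (ω : List B) : lenA M (mk M ω) = Multiplicative.ofAdd ω.length := by
  simp [lenA, liftA_mk, ← ofAdd_nsmul]

open scoped Classical in
/-- The support indicator. -/
noncomputable def chi (M : CoxeterMatrix B) (I : Set B) : ArtinTitsMonoid M →* ℕ :=
  liftA (fun i => if i ∈ I then 1 else 0) (by
    intro s t hst hm
    have key : ∀ n, ∀ s t : B, ((altWord s t (n + 2)).map (fun i => if i ∈ I then 1 else 0)).prod =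
        (if s ∈ I then 1 else 0) * (if t ∈ I then 1 else 0) := by
      intro n
      induction n with
      | zero => intro s t; simp [altWord]
      | succ n ih =>
        intro s t
        rw [show altWord s t (n + 1 + 2) = s :: altWord t s (n + 2) from rfl, List.map_cons,
          List.prod_cons, ih]
        split_ifs <;> simp
    have h1 := M.off_diagonal s t hst
    obtain ⟨n, hn⟩ : ∃ n, M s t = n + 2 := ⟨M s t - 2, by omega⟩
    rw [hn, key, key, mul_comm])

theorem chi_mk (I : Set B) (ω : List B) : chi M I (mk M ω) = 1 ↔ ∀ i ∈ ω, i ∈ I := by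
  classical
  rw [chi, liftA_mk]
  induction ω with
  | nil => simp
  | cons i ω ih =>
    rw [List.map_cons, List.prod_cons, mul_eq_one, ih]
    simp

theorem chi_closure (I : Set B) {x : ArtinTitsMonoid M}
    (hx : x ∈ Submonoid.closure (ArtinTitsMonoid.of M '' I)) : chi M I x = 1 := by
  induction hx using Submonoid.closure_induction with
  | mem x hx =>
    obtain ⟨i, hi, rfl⟩ := hx
    rw [← mk_single, chi_mk]; simpa using hi
  | one => simp
  | mul x y _ _ h1 h2 => rw [map_mul, h1, h2]

variable {W : Type*} [Group W] (cs : CoxeterSystem M W)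

theorem piA_rel (s t : B) (_ : s ≠ t) (_ : M s t ≠ 0) :
    ((altWord s t (M s t)).map cs.simple).prod = ((altWord t s (M s t)).map cs.simple).prod :=
  alt_braid (cs := cs) s t

/-- The projection to the Coxeter group. -/
def piA : ArtinTitsMonoid M →* W := liftA cs.simple (piA_rel cs)

theorem piA_mk (ω : List B) : piA cs (mk M ω) = cs.wordProd ω := by
  rw [piA, liftA_mk]; rfl

theorem matsumoto [Finite W] {ω ω' : List B} (h : cs.IsReduced ω) (h' : cs.IsReduced ω')
    (he : cs.wordProd ω = cs.wordProd ω') : mk M ω = mk M ω' := by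
  induction hn : ω.length generalizing ω ω' with
  | zero =>
    have : ω'.length = 0 := by rw [← h'.eq, ← he, h.eq, hn]
    rw [List.length_eq_zero_iff] at hn this
    rw [hn, this]
  | succ n ih =>
    have hn' : ω'.length = n + 1 := by rw [← h'.eq, ← he, h.eq, hn]
    cases ω with
    | nil => simp at hn
    | cons s ω =>
    cases ω' with
    | nil => simp at hn'
    | cons t ω' =>
    have hr : cs.IsReduced ω := by simpa using h.drop 1
    have hr' : cs.IsReduced ω' := by simpa using h'.drop 1
    simp only [List.length_cons, Nat.add_right_cancel_iff] at hn hn'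
    rw [mk_cons, mk_cons]
    by_cases hst : s = t
    · subst hst
      rw [ih hr hr' (by simpa [cs.wordProd_cons] using he) hn]
    · set u := cs.wordProd (s :: ω) with hu
      have es : cs.simple s * u = cs.wordProd ω := by rw [hu, cs.wordProd_cons]; simp
      have et : cs.simple t * u = cs.wordProd ω' := by rw [he, cs.wordProd_cons]; simp
      have hul : cs.length u = n + 1 := by rw [hu, h.eq]; simp [hn]
      have h1 := alt_prefix hst (cs := cs) (x := u) (by rw [es, hr.eq]; omega)
        (by rw [et, hr'.eq]; omega) (M s t) (Or.inr le_rfl)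
      set D := cs.wordProd (altWord s t (M s t)) with hD
      obtain ⟨ζ, hζ, hζ'⟩ := cs.exists_isReduced (D⁻¹ * u)
      obtain ⟨q, hq⟩ : ∃ q, M s t = q + 1 :=
        Nat.exists_eq_succ_of_ne_zero (M_ne_zero cs hst)
      have hzl : q + ζ.length = n := by
        rw [← hζ.eq, ← hζ']; omega
      have key : ∀ a b : B, ∀ η : List B, cs.wordProd (altWord a b (M s t)) = D →
          cs.simple a * u = cs.wordProd η → cs.IsReduced η → η.length = n →
          mk M η = mk M (altWord b a q ++ ζ) := by
        intro a b η hab hη1 hη2 hη3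
        have hp : cs.wordProd (altWord b a q ++ ζ) = cs.wordProd η := by
          rw [cs.wordProd_append, ← hζ', ← hη1, ← hab, hq]
          show _ * ((cs.wordProd (a :: altWord b a q))⁻¹ * u) = _
          rw [cs.wordProd_cons]; simp [mul_assoc]
        apply ih hη2 _ hp.symm hη3
        unfold CoxeterSystem.IsReduced
        rw [hp, hη2.eq, List.length_append, alt_len]; omega
      rw [key s t ω rfl es hr hn, key t s ω' (by rw [hD, alt_braid]) et hr' hn', ← mk_cons,
        ← mk_cons, ← List.cons_append, ← List.cons_append, mk_append, mk_append]
      congr 1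
      have := mk_braid hst (M_ne_zero cs hst)
      rw [hq] at this
      exact this

/-- The lift of an element of `W`. -/
noncomputable def br (u : W) : ArtinTitsMonoid M := mk M (cs.exists_isReduced u).choose

theorem br_word [Finite W] {ω : List B} (h : cs.IsReduced ω) : br cs (cs.wordProd ω) = mk M ω := by
  have := (cs.exists_isReduced (cs.wordProd ω)).choose_spec
  exact matsumoto cs this.1 h this.2.symm

theorem br_mul [Finite W] {u v : W} (h : perp cs u v) : br cs (u * v) = br cs u * br cs v := by
  obtain ⟨ω, h1, rfl⟩ := cs.exists_isReduced u
  obtain ⟨ω', h2, rfl⟩ := cs.exists_isReduced v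
  have h3 : cs.IsReduced (ω ++ ω') := by
    unfold CoxeterSystem.IsReduced
    unfold perp at h
    rw [cs.wordProd_append, h, h1.eq, h2.eq, List.length_append]
  rw [← cs.wordProd_append, br_word cs h1, br_word cs h2, br_word cs h3, mk_append]

theorem br_simple [Finite W] (i : B) : br cs (cs.simple i) = ArtinTitsMonoid.of M i := by
  have : cs.IsReduced [i] := by simp [CoxeterSystem.IsReduced]
  rw [← mk_single, ← br_word cs this]; simp

theorem br_le [Finite W] {u v : W} (h : wle cs u v) : br cs v = br cs u * br cs (u⁻¹ * v) := by
  rw [← br_mul cs (perp_of_wle h)]; simp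

theorem piA_br (u : W) : piA cs (br cs u) = u := by
  rw [br, piA_mk]
  exact (cs.exists_isReduced u).choose_spec.2.symm

/-- The maximal prefix of `y` that can be multiplied by `u`. -/
noncomputable def mx [Finite W] (u y : W) : W := (exists_mx cs u y).choose

theorem mx_le [Finite W] (u y : W) : wle cs (mx cs u y) y := (exists_mx cs u y).choose_spec.1.1

theorem mx_perp [Finite W] (u y : W) : perp cs u (mx cs u y) :=
  (exists_mx cs u y).choose_spec.1.2

theorem le_mx [Finite W] {u y x : W} (h : wle cs x y) (h' : perp cs u x) :
    wle cs x (mx cs u y) :=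
  (exists_mx cs u y).choose_spec.2 x h h'

theorem mx_eq [Finite W] {u y m : W} (h : wle cs m y) (h' : perp cs u m)
    (h2 : ∀ x, wle cs x y → perp cs u x → wle cs x m) : mx cs u y = m :=
  wle_antisymm (h2 _ (mx_le cs u y) (mx_perp cs u y)) (le_mx cs h h')

/-- Action of a generator on heads. -/
noncomputable def actS [Finite W] (i : B) : Function.End W :=
  fun y => cs.simple i * mx cs (cs.simple i) y

theorem mx_comp [Finite W] (s u y : W) (h : perp cs s u) :
    mx cs s (u * mx cs u y) = u * mx cs (s * u) y := by
  have hp := mx_perp cs u y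
  have hp2 := mx_perp cs (s * u) y
  -- general transfer
  have tr : ∀ z, perp cs (s * u) z → perp cs u z ∧ perp cs s (u * z) := by
    intro z hz
    unfold perp at *
    have a1 := cs.length_mul_le u z
    have a2 := cs.length_mul_le s (u * z)
    rw [← mul_assoc] at a2 ⊢
    omega
  have tr' : ∀ z, perp cs u z → perp cs s (u * z) → perp cs (s * u) z := by
    intro z hz hz'
    unfold perp at *
    rw [← mul_assoc] at hz'
    omega
  apply mx_eq
  · exact perp_mono hp (le_mx cs (mx_le cs _ _) (tr _ hp2).1)
  · exact (tr _ hp2).2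
  · intro x hx hx'
    -- enlarge x to the maximum
    refine wle_trans (le_mx cs hx hx') ?_
    set x₀ := mx cs s (u * mx cs u y) with hx0
    have hu : wle cs u x₀ := le_mx cs (wle_mul_iff.mpr hp) h
    have h0 : wle cs x₀ (u * mx cs u y) := mx_le cs _ _
    have h0' : perp cs s x₀ := mx_perp cs _ _
    have e : x₀ = u * (u⁻¹ * x₀) := by simp
    have hz : perp cs u (u⁻¹ * x₀) := perp_of_wle hu
    have hz1 : wle cs (u⁻¹ * x₀) (mx cs u y) := by
      apply perp_cancel hp hz
      rwa [← e]
    have hz2 : perp cs (s * u) (u⁻¹ * x₀) := tr' _ hz (by rwa [← e])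
    rw [e]
    exact perp_mono (tr _ hp2).1 (le_mx cs (wle_trans hz1 (mx_le cs _ _)) hz2)

theorem act_word [Finite W] {ω : List B} (h : cs.IsReduced ω) (y : W) :
    (ω.map (actS cs)).prod y = cs.wordProd ω * mx cs (cs.wordProd ω) y := by
  induction ω with
  | nil =>
    have : mx cs 1 y = y := mx_eq cs (wle_refl _) (by simp [perp]) (fun x h _ => h)
    rw [cs.wordProd_nil, this]; simp; rfl
  | cons i ω ih =>
    have hr : cs.IsReduced ω := by simpa using h.drop 1
    rw [List.map_cons, List.prod_cons]
    show actS cs i ((ω.map (actS cs)).prod y) = _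
    rw [ih hr, cs.wordProd_cons]
    unfold actS
    rw [mx_comp, mul_assoc]
    unfold perp
    rw [← cs.wordProd_cons, h.eq, hr.eq, cs.length_simple, List.length_cons]; omega

theorem act_rel [Finite W] (s t : B) (hst : s ≠ t) (_ : M s t ≠ 0) :
    ((altWord s t (M s t)).map (actS cs)).prod = ((altWord t s (M s t)).map (actS cs)).prod := by
  funext y
  rw [act_word cs (alt_reduced cs hst le_rfl), M.symmetric s t,
    act_word cs (alt_reduced cs hst.symm le_rfl), alt_braid (cs := cs) t s]

/-- The action on heads. -/
noncomputable def actA [Finite W] : ArtinTitsMonoid M →* Function.End W :=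
  liftA (actS cs) (act_rel cs)

/-- The head. -/
noncomputable def al [Finite W] (x : ArtinTitsMonoid M) : W := actA cs x 1

theorem actA_of [Finite W] (i : B) (y : W) :
    actA cs (ArtinTitsMonoid.of M i) y = cs.simple i * mx cs (cs.simple i) y := by
  rw [← mk_single, actA, liftA_mk]; simp; rfl

theorem actA_mul [Finite W] (x x' : ArtinTitsMonoid M) (y : W) :
    actA cs (x * x') y = actA cs x (actA cs x' y) := by
  rw [map_mul]; rfl

theorem al_mul [Finite W] (x x' : ArtinTitsMonoid M) :
    al cs (x * x') = actA cs x (al cs x') := actA_mul cs x x' 1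

theorem al_one [Finite W] : al cs (1 : ArtinTitsMonoid M) = 1 := by
  unfold al; rw [map_one]; rfl

theorem actA_br [Finite W] (u y : W) : actA cs (br cs u) y = u * mx cs u y := by
  obtain ⟨ω, h1, rfl⟩ := cs.exists_isReduced u
  rw [br_word cs h1, actA, liftA_mk, act_word cs h1]

theorem al_dvd [Finite W] (x : ArtinTitsMonoid M) : ∃ u, x = br cs (al cs x) * u := by
  obtain ⟨ω, rfl⟩ := mk_surj x
  induction ω with
  | nil =>
    refine ⟨mk M [], ?_⟩
    rw [mk_nil, al_one, mul_one]
    have : cs.IsReduced [] := by simp [CoxeterSystem.IsReduced]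
    rw [← mk_nil, ← br_word cs this]; simp
  | cons i ω ih =>
    obtain ⟨u, hu⟩ := ih
    rw [mk_cons, al_mul, actA_of]
    set A := al cs (mk M ω)
    refine ⟨br cs ((mx cs (cs.simple i) A)⁻¹ * A) * u, ?_⟩
    rw [br_mul cs (mx_perp cs _ _), br_simple]
    conv_lhs => rw [hu, br_le cs (mx_le cs (cs.simple i) A)]
    simp only [mul_assoc]

theorem le_al [Finite W] {x z : ArtinTitsMonoid M} {u : W} (h : x = br cs u * z) :
    wle cs u (al cs x) := by
  rw [h, al_mul, actA_br, wle_mul_iff]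
  exact mx_perp cs _ _

theorem dvd_top [Finite W] {l : List B} (hl : cs.IsReduced l) {e z : ArtinTitsMonoid M}
    (h : mk M l = e * z) : e = br cs (piA cs e) := by
  obtain ⟨ω, rfl⟩ := mk_surj e
  obtain ⟨ω', rfl⟩ := mk_surj z
  rw [← mk_append] at h
  have h1 := congrArg (lenA M) h
  rw [lenA_mk, lenA_mk, Multiplicative.ofAdd.injective.eq_iff] at h1
  have h2 := congrArg (piA cs) h
  rw [piA_mk, piA_mk] at h2
  have h3 : cs.IsReduced (ω ++ ω') := by
    unfold CoxeterSystem.IsReduced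
    rw [← h2, ← h1, hl.eq]
  have h4 : cs.IsReduced ω := by simpa using h3.take ω.length
  rw [piA_mk, br_word cs h4]

theorem isGcd_al [Finite W] {w₀ : W} (hw₀ : ∀ u : W, cs.length u ≤ cs.length w₀)
    {l : List B} (hl : cs.wordProd l = w₀) (hr : cs.IsReduced l) (x : ArtinTitsMonoid M) :
    IsLeftGcd x (mk M l) (br cs (al cs x)) := by
  refine ⟨al_dvd cs x, ⟨br cs ((al cs x)⁻¹ * w₀), ?_⟩, ?_⟩
  · rw [← br_word cs hr, hl]
    exact br_le cs (wle_top hw₀ _)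
  · rintro e ⟨u, hu⟩ ⟨v, hv⟩
    have he := dvd_top cs hr hv
    rw [he] at hu
    exact ⟨_, by rw [br_le cs (le_al cs hu), ← he]⟩

theorem isGcd_eq [Finite W] {w₀ : W} (hw₀ : ∀ u : W, cs.length u ≤ cs.length w₀)
    {l : List B} (hl : cs.wordProd l = w₀) (hr : cs.IsReduced l) {x d : ArtinTitsMonoid M}
    (h : IsLeftGcd x (mk M l) d) : d = br cs (al cs x) := by
  obtain ⟨⟨u, hu⟩, ⟨v, hv⟩, h3⟩ := h
  have he := dvd_top cs hr hv
  rw [he] at hu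
  have h1 := le_al cs hu
  obtain ⟨h4, h5, -⟩ := isGcd_al cs hw₀ hl hr x
  obtain ⟨z, hz⟩ := h3 _ h4 h5
  have h6 : wle cs (al cs x) (piA cs d) := by
    have := le_al cs hz
    rw [he] at this
    -- `al (br u) = u`
    have e : al cs (br cs (piA cs d)) = piA cs d := by
      unfold al
      rw [actA_br]
      have : mx cs (piA cs d) 1 = 1 := by
        apply mx_eq
        · exact wle_refl _
        · simp [perp]
        · exact fun x h _ => h
      rw [this, mul_one]
    rwa [e] at this
  rw [he, wle_antisymm h1 h6]

end monoid

end ArtinAux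
namespace ArtinAux

section final
variable {B : Type*} {M : CoxeterMatrix B} {W : Type*} [Group W] {cs : CoxeterSystem M W}
  {I : Set B}

theorem InI_of_chi {x : ArtinTitsMonoid M} (h : chi M I x = 1) : InI cs I (piA cs x) := by
  obtain ⟨ω, rfl⟩ := mk_surj x
  rw [chi_mk] at h
  exact ⟨ω, h, (piA_mk cs ω).symm⟩

theorem chi_of_mul {x y : ArtinTitsMonoid M} (h : chi M I (x * y) = 1) :
    chi M I x = 1 ∧ chi M I y = 1 := by
  rw [map_mul] at h
  exact mul_eq_one.mp h

theorem conj_word {C : W} (hC : ∀ i ∈ I, ∃ t, cs.simple i * C = C * cs.simple t)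
    (ω : List B) (hω : ∀ i ∈ ω, i ∈ I) :
    ∃ ω' : List B, ω'.length = ω.length ∧ C⁻¹ * cs.wordProd ω * C = cs.wordProd ω' ∧
      ∀ r ∈ cs.leftInvSeq ω', InI cs I (C * r * C⁻¹) := by
  induction ω with
  | nil => exact ⟨[], rfl, by simp, by simp⟩
  | cons i ω ih =>
    obtain ⟨ω', h1, h2, h3⟩ := ih (fun j hj => hω j (by simp [hj]))
    have hi : i ∈ I := hω i (by simp)
    obtain ⟨t, ht⟩ := hC i hi
    have e : C * cs.simple t * C⁻¹ = cs.simple i := by rw [← ht]; simp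
    have e' : cs.simple t = C⁻¹ * cs.simple i * C := by rw [← e]; simp [mul_assoc]
    refine ⟨t :: ω', by simp [h1], ?_, ?_⟩
    · rw [cs.wordProd_cons, cs.wordProd_cons, ← h2, e']; simp [mul_assoc]
    · intro r hr
      simp only [CoxeterSystem.leftInvSeq, List.mem_cons, List.mem_map] at hr
      rcases hr with rfl | ⟨r', hr', rfl⟩
      · rw [e]; exact InI.simple hi
      · have := ((InI.simple (cs := cs) hi).mul (h3 r' hr')).mul (InI.simple (cs := cs) hi)
        convert this using 1
        simp only [MulAut.conj_apply, cs.inv_simple]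
        rw [e']; simp [mul_assoc]

theorem mx_par [Finite W] {C : W}
    (hasc : ∀ i ∈ I, ¬ cs.length (cs.simple i * C) < cs.length C)
    (hC : ∀ i ∈ I, ∃ t, cs.simple i * C = C * cs.simple t)
    {A : W} (hA : ∀ z, wle cs z A → InI cs I z) {i : B} (hi : i ∈ I) :
    mx cs (cs.simple i) (A * C) = mx cs (cs.simple i) A * C := by
  have P : ∀ {p : W}, InI cs I p → cs.length (p * C) = cs.length p + cs.length C :=
    fun hp => InI.perp hasc hp
  set s := cs.simple i with hs
  have hsI : InI cs I s := InI.simple hi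
  set z₀ := mx cs s A with hz0
  have hz0A : wle cs z₀ A := mx_le cs _ _
  have hz0s : perp cs s z₀ := mx_perp cs _ _
  have hz0I := hA _ hz0A
  have hAI := hA A (wle_refl _)
  set z' := z₀⁻¹ * A with hz'
  have hz'I : InI cs I z' := hz0I.inv.mul hAI
  obtain ⟨ω, hω1, hω2, hω3⟩ := hz'I.reduced
  obtain ⟨ω', h1, h2, h3⟩ := conj_word hC ω hω1
  rw [hω2] at h2
  have hlω := cs.length_wordProd_le ω'
  rw [← h2, h1, hω3] at hlω
  have hz0A' : cs.length z₀ + cs.length z' = cs.length A := hz0A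
  have eAC : (z₀ * C)⁻¹ * (A * C) = C⁻¹ * z' * C := by simp [hz', mul_assoc]
  have hle : wle cs (z₀ * C) (A * C) := by
    have a1 := len_tri (cs := cs) (z₀ * C) (A * C)
    unfold wle
    rw [eAC] at a1 ⊢
    rw [P hz0I, P hAI] at a1 ⊢
    omega
  have hp1 : perp cs s (z₀ * C) := by
    unfold perp at *
    rw [← mul_assoc, P (hsI.mul hz0I), P hz0I]; omega
  by_contra hne
  have hle1 : wle cs (z₀ * C) (mx cs s (A * C)) := le_mx cs hle hp1
  obtain ⟨r, hr1, hr2⟩ := wle_step hle1 (Ne.symm hne)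
  have hr3 := wle_trans hr2 (mx_le cs _ _)
  have hr4 := perp_prefix (mx_perp cs s (A * C)) hr2
  have hd := (step_descent hr1 hr3).2
  rw [eAC] at hd
  have hd' := hd
  rw [h2] at hd'
  have hrI := h3 _ (exch_left cs ω' r hd')
  set r' := C * cs.simple r * C⁻¹ with hr'
  have er : r' * C = C * cs.simple r := by simp [hr']
  have hr'len : cs.length r' ≤ 1 := by
    have a1 := P hrI
    rw [er] at a1
    have a2 := cs.length_mul_simple C r
    omega
  have e1 : r' * z' * C = C * (cs.simple r * (C⁻¹ * z' * C)) := by simp [hr', mul_assoc]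
  have hdes : cs.length (r' * z') + 1 ≤ cs.length z' := by
    have a1 := P (hrI.mul hz'I)
    rw [e1] at a1
    have a2 := cs.length_mul_le C (cs.simple r * (C⁻¹ * z' * C))
    omega
  have e2 : z₀ * C * cs.simple r = z₀ * r' * C := by simp [hr', mul_assoc]
  have hl1 : cs.length (z₀ * r') = cs.length z₀ + 1 := by
    rw [e2, P (hz0I.mul hrI), P hz0I] at hr1
    omega
  have einv : r'⁻¹ = r' := by simp [hr', mul_assoc]
  have hle2 : wle cs (z₀ * r') A := by
    have e : (z₀ * r')⁻¹ * A = r' * z' := by rw [mul_inv_rev, einv, mul_assoc]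
    have a1 := len_tri (cs := cs) (z₀ * r') A
    unfold wle
    rw [e] at a1 ⊢
    omega
  have hp2 : perp cs s (z₀ * r') := by
    unfold perp at hr4 ⊢
    rw [e2, ← mul_assoc, P (hsI.mul (hz0I.mul hrI)), P (hz0I.mul hrI)] at hr4
    omega
  have := wle_len (le_mx cs hle2 hp2)
  rw [← hz0] at this
  omega

theorem head_par [Finite W] {C : W}
    (hasc : ∀ i ∈ I, ¬ cs.length (cs.simple i * C) < cs.length C)
    (hC : ∀ i ∈ I, ∃ t, cs.simple i * C = C * cs.simple t)
    (ω : List B) (hω : ∀ i ∈ ω, i ∈ I) :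
    actA cs (mk M ω) C = al cs (mk M ω) * C := by
  induction ω with
  | nil => rw [mk_nil, al_one, one_mul, map_one]; rfl
  | cons i ω ih =>
    have hω' : ∀ j ∈ ω, j ∈ I := fun j hj => hω j (by simp [hj])
    rw [mk_cons, actA_mul, ih hω', al_mul, actA_of, actA_of,
      mx_par hasc hC _ (hω i (by simp)), mul_assoc]
    intro z hz
    obtain ⟨u, hu⟩ := al_dvd cs (mk M ω)
    rw [br_le cs hz, mul_assoc] at hu
    have h := (chi_mk (M := M) I ω).mpr hω'
    rw [hu] at h
    have := InI_of_chi (cs := cs) (chi_of_mul h).1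
    rwa [piA_br] at this

theorem al_InI [Finite W] {x : ArtinTitsMonoid M} (h : chi M I x = 1) : InI cs I (al cs x) := by
  obtain ⟨u, hu⟩ := al_dvd cs x
  rw [hu] at h
  have := InI_of_chi (cs := cs) (chi_of_mul h).1
  rwa [piA_br] at this

theorem head_asc [Finite W] {w : ArtinTitsMonoid M} {i : B}
    (h : ¬ ∃ u, w = ArtinTitsMonoid.of M i * u) :
    ¬ cs.length (cs.simple i * al cs w) < cs.length (al cs w) := by
  intro hd
  apply h
  obtain ⟨u, hu⟩ := al_dvd cs w
  have hle : wle cs (cs.simple i) (al cs w) := by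
    unfold wle
    have := cs.length_simple_mul (al cs w) i
    rw [cs.length_simple, cs.inv_simple]
    omega
  rw [br_le cs hle, br_simple, mul_assoc] at hu
  exact ⟨_, hu⟩

theorem head_conj [Finite W] {w : ArtinTitsMonoid M} {i t : B}
    (h : ¬ ∃ u, w = ArtinTitsMonoid.of M i * u)
    (hc : ArtinTitsMonoid.of M i * w = w * ArtinTitsMonoid.of M t) :
    ∃ t, cs.simple i * al cs w = al cs w * cs.simple t := by
  have hasc := head_asc (cs := cs) h
  set C := al cs w with hCdef
  have hl : cs.length (cs.simple i * C) = cs.length C + 1 := by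
    have := cs.length_simple_mul C i
    omega
  have e : al cs (ArtinTitsMonoid.of M i * w) = cs.simple i * C := by
    rw [al_mul, actA_of]
    congr 1
    apply mx_eq cs (wle_refl _)
    · unfold perp; rw [cs.length_simple, ← hCdef]; omega
    · exact fun x h _ => h
  obtain ⟨u, hu⟩ := al_dvd cs w
  have hle : wle cs C (cs.simple i * C) := by
    rw [← e, hc]
    refine le_al cs (z := u * ArtinTitsMonoid.of M t) ?_
    rw [← mul_assoc, ← hu]
  have h1 : cs.length (C⁻¹ * (cs.simple i * C)) = 1 := by
    unfold wle at hle; omega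
  obtain ⟨t', ht'⟩ := cs.length_eq_one_iff.mp h1
  exact ⟨t', by rw [← ht']; simp⟩

end final

end ArtinAux

/-- In the Artin–Tits monoid of a finite Coxeter system with Garside element `Δ` (the image
of a reduced word for the longest element `w₀`), let `I ⊆ S`, let `w` be divisible by no
element of `I` and conjugate each element of `I` to an element of `S`, and let
`v ∈ B_I⁺`.  If `a` is a left gcd of `v` and `Δ` and `c` is a left gcd of `w` and `Δ`,
then `a·c` is a left gcd of `v·w` and `Δ`. -/
theorem artin_head_of_parabolic_product
    {B : Type*} (M : CoxeterMatrix B) {W : Type*} [Group W] (cs : CoxeterSystem M W)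
    [Finite W]
    (w₀ : W) (hw₀ : ∀ u : W, cs.length u ≤ cs.length w₀)
    (l : List B) (hl : cs.wordProd l = w₀) (hlen : l.length = cs.length w₀)
    (Δ : ArtinTitsMonoid M) (hΔ : Δ = (braidCon M).mk' (FreeMonoid.ofList l))
    (I : Set B) (w : ArtinTitsMonoid M)
    (hred : ∀ s ∈ I, ¬ ∃ u, w = ArtinTitsMonoid.of M s * u)
    (hconj : ∀ s ∈ I, ∃ t : B, ArtinTitsMonoid.of M s * w = w * ArtinTitsMonoid.of M t)
    (v : ArtinTitsMonoid M) (hv : v ∈ Submonoid.closure (ArtinTitsMonoid.of M '' I))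
    (a c : ArtinTitsMonoid M)
    (ha : IsLeftGcd v Δ a) (hc : IsLeftGcd w Δ c) :
    IsLeftGcd (v * w) Δ (a * c) := by
  have hr : cs.IsReduced l := by
    unfold CoxeterSystem.IsReduced
    rw [hl, hlen]
  have hΔ' : Δ = ArtinAux.mk M l := hΔ
  subst hΔ'
  rw [ArtinAux.isGcd_eq cs hw₀ hl hr ha, ArtinAux.isGcd_eq cs hw₀ hl hr hc]
  have hasc : ∀ i ∈ I, ¬ cs.length (cs.simple i * ArtinAux.al cs w) <
      cs.length (ArtinAux.al cs w) := fun i hi => ArtinAux.head_asc (hred i hi)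
  have hC : ∀ i ∈ I, ∃ t, cs.simple i * ArtinAux.al cs w = ArtinAux.al cs w * cs.simple t := by
    intro i hi
    obtain ⟨t, ht⟩ := hconj i hi
    exact ArtinAux.head_conj (hred i hi) ht
  have hchi := ArtinAux.chi_closure I hv
  have hA := ArtinAux.al_InI (cs := cs) hchi
  have hmul : ArtinAux.al cs (v * w) = ArtinAux.al cs v * ArtinAux.al cs w := by
    obtain ⟨ω, rfl⟩ := ArtinAux.mk_surj v
    rw [ArtinAux.al_mul]
    exact ArtinAux.head_par hasc hC ω ((ArtinAux.chi_mk I ω).mp hchi)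
  rw [← ArtinAux.br_mul cs (ArtinAux.InI.perp hasc hA), ← hmul]
  exact ArtinAux.isGcd_al cs hw₀ hl hr (v * w)
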